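/- arXiv:2209.05820 — 2 statements merged into one kernel-verified Lean document; each statement's English description precedes it below -/
import Mathlib

section
/- The map φ₄ is an order automorphism of (D, ⊑). Here φ₄ sends a digraph G to the digraph on the same vertex set obtained as follows: for every pair of distinct vertices u, v such that neither u nor v carries a loop and exactly one of the edges (u,v), (v,u) is present, reverse that edge; all loops and all other adjacencies are unchanged. φ₄ is well defined on isomorphism classes and so gives a map D → D. -/
/-- A finite digraph: a finite nonempty vertex set `Fin n` with a (Bool-valued)
edge relation, loops allowed. -/
structure FinDigraph where
  n : ℕ
  pos : 0 < n
  adj : Fin n → Fin n → Bool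

namespace FinDigraph

/-- Isomorphism of finite digraphs. -/
def Iso (G H : FinDigraph) : Prop :=
  ∃ e : Fin G.n ≃ Fin H.n, ∀ u v, H.adj (e u) (e v) = G.adj u v

theorem iso_refl (G : FinDigraph) : Iso G G := ⟨Equiv.refl _, fun _ _ => rfl⟩

theorem iso_symm {G H : FinDigraph} (h : Iso G H) : Iso H G := by
  obtain ⟨e, he⟩ := h
  refine ⟨e.symm, fun u v => ?_⟩
  rw [← he (e.symm u) (e.symm v), e.apply_symm_apply, e.apply_symm_apply]

theorem iso_trans {G H K : FinDigraph} (hGH : Iso G H) (hHK : Iso H K) : Iso G K := by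
  obtain ⟨e, he⟩ := hGH
  obtain ⟨f, hf⟩ := hHK
  exact ⟨e.trans f, fun u v => (hf (e u) (e v)).trans (he u v)⟩

instance isoSetoid : Setoid FinDigraph :=
  ⟨Iso, iso_refl, fun h => iso_symm h, fun h h' => iso_trans h h'⟩

/-- `Emb G H` : `G` is isomorphic to an induced subdigraph of `H`. -/
def Emb (G H : FinDigraph) : Prop :=
  ∃ f : Fin G.n ↪ Fin H.n, ∀ u v, H.adj (f u) (f v) = G.adj u v

end FinDigraph

/-- `D`: the isomorphism classes of finite digraphs. -/
def D : Type := Quotient FinDigraph.isoSetoid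

/-- The isomorphism class of a finite digraph. -/
def toD (G : FinDigraph) : D := Quotient.mk _ G

/-- The substructure (induced subdigraph) ordering `⊑` on `D`. -/
instance : LE D :=
  ⟨fun x y => ∃ G H : FinDigraph, x = toD G ∧ y = toD H ∧ FinDigraph.Emb G H⟩

/-- An order automorphism: a bijection such that `x ≤ y ↔ f x ≤ f y`. -/
def IsOrderAuto {α : Type*} [LE α] (f : α → α) : Prop :=
  Function.Bijective f ∧ ∀ x y : α, x ≤ y ↔ f x ≤ f y

/-- φ₁ on digraphs: complement the loop status of every vertex. -/
def phi1Fn (G : FinDigraph) : FinDigraph :=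
  ⟨G.n, G.pos, fun u v => if u = v then !(G.adj u v) else G.adj u v⟩

/-- Edge reversal: transpose the edge relation. -/
def revFn (G : FinDigraph) : FinDigraph :=
  ⟨G.n, G.pos, fun u v => G.adj v u⟩

/-- φ₂ on digraphs: toggle both edges between distinct loopless vertices joined
by both or neither of the two possible edges. -/
def phi2Fn (G : FinDigraph) : FinDigraph :=
  ⟨G.n, G.pos, fun u v =>
    if u ≠ v ∧ G.adj u u = false ∧ G.adj v v = false ∧ G.adj u v = G.adj v u then
      !(G.adj u v)
    else G.adj u v⟩

/-- φ₃ on digraphs: toggle both edges between distinct looped vertices joined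
by both or neither of the two possible edges. -/
def phi3Fn (G : FinDigraph) : FinDigraph :=
  ⟨G.n, G.pos, fun u v =>
    if u ≠ v ∧ G.adj u u = true ∧ G.adj v v = true ∧ G.adj u v = G.adj v u then
      !(G.adj u v)
    else G.adj u v⟩

/-- φ₄ on digraphs: reverse the single edge between distinct loopless vertices
joined by exactly one of the two possible edges. -/
def phi4Fn (G : FinDigraph) : FinDigraph :=
  ⟨G.n, G.pos, fun u v =>
    if u ≠ v ∧ G.adj u u = false ∧ G.adj v v = false ∧ G.adj u v ≠ G.adj v u then
      G.adj v u
    else G.adj u v⟩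

/-- φ₅ on digraphs: reverse the single edge between distinct looped vertices
joined by exactly one of the two possible edges. -/
def phi5Fn (G : FinDigraph) : FinDigraph :=
  ⟨G.n, G.pos, fun u v =>
    if u ≠ v ∧ G.adj u u = true ∧ G.adj v v = true ∧ G.adj u v ≠ G.adj v u then
      G.adj v u
    else G.adj u v⟩

/-- φ_π on digraphs: for each ordered pair `(u,v)` of distinct vertices with a loop at
`u` and no loop at `v`, replace its type `(Adj(u,v), Adj(v,u)) : Bool × Bool` by `π`
applied to it; everything else is unchanged. -/
def phiPiFn (π : Equiv.Perm (Bool × Bool)) (G : FinDigraph) : FinDigraph :=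
  ⟨G.n, G.pos, fun u v =>
    if u = v then G.adj u v
    else if G.adj u u = true ∧ G.adj v v = false then (π (G.adj u v, G.adj v u)).1
    else if G.adj u u = false ∧ G.adj v v = true then (π (G.adj v u, G.adj u v)).2
    else G.adj u v⟩

/-- The number of vertices of an isomorphism class. -/
def nVerts : D → ℕ :=
  Quotient.lift (fun G : FinDigraph => G.n) (fun _ _ h => by
    obtain ⟨e, -⟩ := h
    simpa using Fintype.card_congr e)

/-- `Dn n`: the classes of digraphs with at most `n` vertices (first `n` levels). -/
def Dn (n : ℕ) : Set D := {x : D | nVerts x ≤ n}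

theorem mem_Dn_succ {n : ℕ} {x : D} (h : x ∈ Dn n) : x ∈ Dn (n + 1) :=
  le_trans h (Nat.le_succ n)

/-- The set of lower covers of `x` in `(D, ⊑)`. -/
def lcov (x : D) : Set D :=
  {y : D | y ≤ x ∧ y ≠ x ∧ ∀ z : D, y ≤ z → z ≤ x → z = y ∨ z = x}

/-- `scount x` = number of classes sharing the lower-cover set of `x`. -/
noncomputable def scount (x : D) : ℕ := Nat.card {y : D // lcov y = lcov x}

/-- `Hset m` = `{(l(G), s(G)) : G ∈ D with exactly m vertices}`. -/
def Hset (m : ℕ) : Set (Set D × ℕ) :=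
  {p : Set D × ℕ | ∃ x : D, nVerts x = m ∧ p = (lcov x, scount x)}

/-- Element-wise action of a map of `Dn n` on a subset of `Dn n`. -/
def setImage {n : ℕ} (φ : ↥(Dn n) → ↥(Dn n)) (S : Set D) : Set D :=
  {z : D | ∃ (y : D) (h : y ∈ Dn n), y ∈ S ∧ z = ↑(φ ⟨y, h⟩)}

/-- Element-wise action of a map of `Dn n` on a set of pairs `(S, k)`. -/
def HsetImage {n : ℕ} (φ : ↥(Dn n) → ↥(Dn n)) (A : Set (Set D × ℕ)) : Set (Set D × ℕ) :=
  {p : Set D × ℕ | ∃ q ∈ A, p = (setImage φ q.1, q.2)}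

/-- The swap permutation `σ(a,b) = (b,a)` of `Bool × Bool`. -/
def sigmaSwap : Equiv.Perm (Bool × Bool) := Equiv.prodComm Bool Bool

/-- Restrictions to `D₃` of order automorphisms of `(D, ⊑)`. -/
def Aut3D : Set (↥(Dn 3) → ↥(Dn 3)) :=
  {g | ∃ φ : D → D, IsOrderAuto φ ∧ ∀ x : ↥(Dn 3), (↑(g x) : D) = φ ↑x}

/-- Restrictions to `D₃` of order automorphisms of `D₄`. -/
def Aut3D4 : Set (↥(Dn 3) → ↥(Dn 3)) :=
  {g | ∃ ψ : ↥(Dn 4) → ↥(Dn 4), IsOrderAuto ψ ∧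
    ∀ x : ↥(Dn 3), (↑(g x) : D) = ↑(ψ ⟨↑x, mem_Dn_succ x.2⟩)}

/-- Restrictions to `D₃` of order automorphisms of `D₄`, as order isomorphisms of `D₃`. -/
def Aut3D4Iso : Set (↥(Dn 3) ≃o ↥(Dn 3)) :=
  {g | ∃ ψ : ↥(Dn 4) → ↥(Dn 4), IsOrderAuto ψ ∧
    ∀ x : ↥(Dn 3), ((g x : ↥(Dn 3)) : D) = ↑(ψ ⟨↑x, mem_Dn_succ x.2⟩)}

/-!
Whether `φ₄` reverses the pair `(u, v)`, and the result of doing so, depends only on the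
subdigraph induced on `{u, v}`; hence `φ₄` sends induced embeddings to induced embeddings.
It preserves loops and the set of pairs which it reverses, so it is its own inverse, and a
monotone involution is an order automorphism.
-/

theorem isOrderAuto_of_involutive {α : Type*} [LE α] {f : α → α} (hf : Function.Involutive f)
    (hmono : ∀ x y, x ≤ y → f x ≤ f y) : IsOrderAuto f :=
  ⟨hf.bijective, fun x y => ⟨hmono x y, fun h => by simpa only [hf x, hf y] using hmono _ _ h⟩⟩

namespace FinDigraph

theorem Iso.emb {G H : FinDigraph} (h : Iso G H) : Emb G H := by
  obtain ⟨e, he⟩ := h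
  exact ⟨e.toEmbedding, he⟩

theorem Emb.antisymm {G H : FinDigraph} (hGH : Emb G H) (hHG : Emb H G) : Iso G H := by
  obtain ⟨f, hf⟩ := hGH
  obtain ⟨g, -⟩ := hHG
  have hbij : Function.Bijective f :=
    f.injective.bijective_of_nat_card_le (Nat.card_le_card_of_injective g g.injective)
  exact ⟨Equiv.ofBijective f hbij, hf⟩

end FinDigraph

namespace D

/-- The map on isomorphism classes induced by a map of digraphs that preserves embeddability.
It is well defined because mutually embeddable finite digraphs are isomorphic. -/
def map (F : FinDigraph → FinDigraph)
    (hF : ∀ G H, FinDigraph.Emb G H → FinDigraph.Emb (F G) (F H)) : D → D :=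
  Quotient.map F fun G H h => (hF G H h.emb).antisymm (hF H G (FinDigraph.iso_symm h).emb)

variable {F : FinDigraph → FinDigraph}
  (hF : ∀ G H, FinDigraph.Emb G H → FinDigraph.Emb (F G) (F H))

theorem map_toD (G : FinDigraph) : map F hF (toD G) = toD (F G) := rfl

theorem map_le_map (x y : D) (h : x ≤ y) : map F hF x ≤ map F hF y := by
  obtain ⟨G, H, rfl, rfl, hGH⟩ := h
  exact ⟨F G, F H, map_toD hF G, map_toD hF H, hF G H hGH⟩

theorem map_involutive (hinv : Function.Involutive F) : Function.Involutive (map F hF) :=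
  Quotient.ind fun G => congrArg toD (hinv G)

end D

namespace FinDigraph

/-- The pairs of vertices whose adjacency is reversed by `φ₄`: distinct, loopless, and joined by
exactly one of the two possible edges. -/
def IsReversible (G : FinDigraph) (u v : Fin G.n) : Prop :=
  u ≠ v ∧ G.adj u u = false ∧ G.adj v v = false ∧ G.adj u v ≠ G.adj v u

variable {G : FinDigraph} {u v : Fin G.n}

theorem isReversible_comm : G.IsReversible u v ↔ G.IsReversible v u := by
  simp only [IsReversible, ne_comm, and_left_comm]

theorem phi4Fn_adj_of_isReversible (h : G.IsReversible u v) :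
    (phi4Fn G).adj u v = G.adj v u :=
  if_pos h

theorem phi4Fn_adj_of_not_isReversible (h : ¬ G.IsReversible u v) :
    (phi4Fn G).adj u v = G.adj u v :=
  if_neg h

theorem phi4Fn_adj_self (v : Fin G.n) : (phi4Fn G).adj v v = G.adj v v :=
  phi4Fn_adj_of_not_isReversible fun h => h.1 rfl

theorem phi4Fn_adj_ne_adj_swap_iff :
    (phi4Fn G).adj u v ≠ (phi4Fn G).adj v u ↔ G.adj u v ≠ G.adj v u := by
  by_cases h : G.IsReversible u v
  · rw [phi4Fn_adj_of_isReversible h, phi4Fn_adj_of_isReversible (isReversible_comm.mp h), ne_comm]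
  · rw [phi4Fn_adj_of_not_isReversible h,
      phi4Fn_adj_of_not_isReversible (mt isReversible_comm.mp h)]

theorem isReversible_phi4Fn_iff : (phi4Fn G).IsReversible u v ↔ G.IsReversible u v := by
  unfold IsReversible
  rw [phi4Fn_adj_self, phi4Fn_adj_self, phi4Fn_adj_ne_adj_swap_iff]
  rfl

theorem phi4Fn_phi4Fn_adj (G : FinDigraph) (u v : Fin G.n) :
    (phi4Fn (phi4Fn G)).adj u v = G.adj u v := by
  by_cases h : G.IsReversible u v
  · calc
      (phi4Fn (phi4Fn G)).adj u v = (phi4Fn G).adj v u :=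
        phi4Fn_adj_of_isReversible (isReversible_phi4Fn_iff.mpr h)
      _ = G.adj u v := phi4Fn_adj_of_isReversible (isReversible_comm.mp h)
  · calc
      (phi4Fn (phi4Fn G)).adj u v = (phi4Fn G).adj u v :=
        phi4Fn_adj_of_not_isReversible (mt isReversible_phi4Fn_iff.mp h)
      _ = G.adj u v := phi4Fn_adj_of_not_isReversible h

theorem phi4Fn_involutive : Function.Involutive phi4Fn := fun G =>
  congrArg (FinDigraph.mk G.n G.pos) (funext₂ (phi4Fn_phi4Fn_adj G))

theorem isReversible_map_iff {H : FinDigraph} {f : Fin G.n ↪ Fin H.n}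
    (hf : ∀ u v, H.adj (f u) (f v) = G.adj u v) :
    H.IsReversible (f u) (f v) ↔ G.IsReversible u v := by
  simp only [IsReversible, hf, f.injective.ne_iff]

theorem phi4Fn_adj_map {H : FinDigraph} {f : Fin G.n ↪ Fin H.n}
    (hf : ∀ u v, H.adj (f u) (f v) = G.adj u v) (u v : Fin G.n) :
    (phi4Fn H).adj (f u) (f v) = (phi4Fn G).adj u v := by
  by_cases h : G.IsReversible u v
  · rw [phi4Fn_adj_of_isReversible h,
      phi4Fn_adj_of_isReversible ((isReversible_map_iff hf).mpr h), hf]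
  · rw [phi4Fn_adj_of_not_isReversible h,
      phi4Fn_adj_of_not_isReversible (mt (isReversible_map_iff hf).mp h), hf]

theorem emb_phi4Fn (G H : FinDigraph) (h : Emb G H) : Emb (phi4Fn G) (phi4Fn H) := by
  obtain ⟨f, hf⟩ := h
  exact ⟨f, phi4Fn_adj_map hf⟩

end FinDigraph

/-- φ₄ is well defined on isomorphism classes and is an order
automorphism of `(D, ⊑)`. -/
theorem phi4_isOrderAuto :
    ∃ φ : D → D, (∀ G : FinDigraph, φ (toD G) = toD (phi4Fn G)) ∧ IsOrderAuto φ := by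
  exact ⟨D.map phi4Fn FinDigraph.emb_phi4Fn, D.map_toD _,
    isOrderAuto_of_involutive (D.map_involutive _ FinDigraph.phi4Fn_involutive) (D.map_le_map _)⟩
end

section
/- Let C be the subgroup of the group of order automorphisms of (D, ⊑) generated by φ₁, φ₂, φ₃, φ₄, φ₅ together with all φ_π for π a permutation of Bool × Bool. Then C is isomorphic to the semidirect product ((ZMod 2)⁴ × Perm(Bool × Bool)) ⋊_α (ZMod 2), where α(1) sends (p,q,r,s,π) to (q,p,s,r, σ∘π∘σ) with σ the permutation of Bool × Bool given by σ(a,b) = (b,a). -/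
/-!
Every generator other than `φ₁` leaves the loops alone and permutes the possible adjacencies of each
pair of distinct vertices, by a permutation that depends only on the two loop statuses. Recoding an
unordered pair in this way is well defined when the permutations used for opposite orders are
conjugate under the swap; in particular the one used on two vertices of equal loop status commutes
with the swap, hence is one of four, and the one used on a looped and a loopless vertex is
arbitrary. This gives `(ZMod 2)⁴ × Perm (Bool × Bool)`, on which conjugation by `φ₁` exchanges the
two loop statuses.

Faithfulness is tested on small digraphs. A two-vertex digraph whose vertices differ in loop status
is rigid and detects everything about mixed pairs. Two vertices of equal loop status detect a
recoding up to the swap, and the swap is detected by an out-star with two leaves, which it turns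
into an in-star.
-/

open Function Multiplicative Equiv

/-- The homomorphism from the cyclic group of order `n` sending the generator to an element `g` with
`g ^ n = 1`; compare `zpowersHom`. -/
def zmodPowersHom {K : Type*} [Group K] {n : ℕ} (g : K) (hg : g ^ n = 1) :
    Multiplicative (ZMod n) →* K :=
  (ZMod.lift n ⟨zmultiplesHom (Additive K) (.ofMul g), by
    simpa [← ofMul_pow] using congrArg Additive.ofMul hg⟩).toMultiplicativeLeft

theorem zmodPowersHom_ofAdd_one {K : Type*} [Group K] {n : ℕ} (g : K) (hg : g ^ n = 1) :
    zmodPowersHom g hg (ofAdd 1) = g := by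
  have h := ZMod.lift_coe n ⟨zmultiplesHom (Additive K) (.ofMul g), by
    simpa [← ofMul_pow] using congrArg Additive.ofMul hg⟩ 1
  simpa [zmodPowersHom] using congrArg Additive.toMul h

theorem eq_one_or_eq_ofAdd_one (e : Multiplicative (ZMod 2)) : e = 1 ∨ e = ofAdd 1 := by
  decide +revert

theorem injective_semidirectProduct_lift {N G H : Type*} [Group N] [Group G] [Group H]
    {φ : G →* MulAut N} {f₁ : N →* H} {f₂ : G →* H}
    (h : ∀ g, f₁.comp (φ g).toMonoidHom = (MulAut.conj (f₂ g)).toMonoidHom.comp f₁)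
    (hf₁ : Function.Injective f₁) (hf₂ : ∀ g, f₂ g ∈ f₁.range → g = 1) :
    Function.Injective (SemidirectProduct.lift f₁ f₂ h) := by
  rw [injective_iff_map_eq_one]
  rintro ⟨a, g⟩ hag
  have hmul : f₁ a * f₂ g = 1 := hag
  obtain rfl : g = 1 := hf₂ g ⟨a⁻¹, by rw [map_inv, inv_eq_of_mul_eq_one_right hmul]⟩
  obtain rfl : a = 1 := hf₁ (by simpa using hmul)
  rfl

namespace FinDigraph

theorem Emb.refl (G : FinDigraph) : Emb G G := ⟨.refl _, fun _ _ => rfl⟩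

theorem Emb.trans {G H K : FinDigraph} : Emb G H → Emb H K → Emb G K
  | ⟨f, hf⟩, ⟨g, hg⟩ => ⟨f.trans g, fun u v => (hg (f u) (f v)).trans (hf u v)⟩

instance : Preorder FinDigraph where
  le := Emb
  le_refl := Emb.refl
  le_trans _ _ _ := Emb.trans

theorem Iso.le {G H : FinDigraph} : Iso G H → G ≤ H
  | ⟨e, he⟩ => ⟨e.toEmbedding, he⟩

theorem iso_of_le_of_le {G H : FinDigraph} : G ≤ H → H ≤ G → Iso G H
  | ⟨f, hf⟩, ⟨g, _⟩ =>
    have hcard : Fintype.card (Fin G.n) = Fintype.card (Fin H.n) :=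
      le_antisymm (Fintype.card_le_of_embedding f) (Fintype.card_le_of_embedding g)
    have hbij : Function.Bijective f :=
      (Fintype.bijective_iff_injective_and_card f).2 ⟨f.injective, hcard⟩
    ⟨Equiv.ofBijective f hbij, hf⟩

theorem Iso.map_orderIso (T : FinDigraph ≃o FinDigraph) {G H : FinDigraph} (h : Iso G H) :
    Iso (T G) (T H) :=
  iso_of_le_of_le (T.monotone h.le) (T.monotone (iso_symm h).le)

end FinDigraph

open FinDigraph

theorem toD_eq_toD_iff {G H : FinDigraph} : toD G = toD H ↔ Iso G H := Quotient.eq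

theorem toD_le_toD_iff {G H : FinDigraph} : toD G ≤ toD H ↔ G ≤ H := by
  constructor
  · rintro ⟨G', H', hG, hH, hle⟩
    exact (toD_eq_toD_iff.1 hG).le.trans (le_trans hle (toD_eq_toD_iff.1 hH.symm).le)
  · exact fun h => ⟨G, H, rfl, rfl, h⟩

theorem orderIso_ext_toD {f g : D ≃o D} (h : ∀ G, f (toD G) = g (toD G)) : f = g :=
  OrderIso.ext (funext fun x => Quotient.inductionOn x h)

/-- The action on isomorphism classes of the order automorphisms of the preorder of digraphs. -/
def classHom : (FinDigraph ≃o FinDigraph) →* (D ≃o D) where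
  toFun T :=
    { toFun := Quotient.map T fun _ _ => Iso.map_orderIso T
      invFun := Quotient.map T.symm fun _ _ => Iso.map_orderIso T.symm
      left_inv := fun x => Quotient.inductionOn x fun G => congrArg toD (T.symm_apply_apply G)
      right_inv := fun x => Quotient.inductionOn x fun G => congrArg toD (T.apply_symm_apply G)
      map_rel_iff' := fun {x y} => Quotient.inductionOn₂ x y fun _ _ =>
        toD_le_toD_iff.trans (T.le_iff_le.trans toD_le_toD_iff.symm) }
  map_one' := orderIso_ext_toD fun _ => rfl
  map_mul' _ _ := orderIso_ext_toD fun _ => rfl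

theorem classHom_toD (T : FinDigraph ≃o FinDigraph) (G : FinDigraph) :
    classHom T (toD G) = toD (T G) := rfl

/-- A family `c` of permutations of the pair types, indexed by the loop statuses of the two
vertices, is coherent if recoding a pair does not depend on the order in which it is read. -/
def coherentRecodings : Subgroup (Bool → Bool → Perm (Bool × Bool)) where
  carrier := {c | ∀ a b t, c b a t.swap = (c a b t).swap}
  one_mem' _ _ _ := rfl
  mul_mem' {c d} hc hd a b t := by
    simp only [Pi.mul_apply, Perm.mul_apply, hd a b t, hc a b]
  inv_mem' {c} hc a b t := by
    have h := hc a b ((c a b)⁻¹ t)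
    rw [← Perm.mul_apply (c a b), mul_inv_cancel, Perm.one_apply] at h
    rw [Pi.inv_apply, Pi.inv_apply, Perm.inv_eq_iff_eq]
    exact h.symm

section Adjacency

variable {V W : Type*} [DecidableEq V] [DecidableEq W]
  (c d : Bool → Bool → Perm (Bool × Bool)) (adj : V → V → Bool)

/-- Complement all loops of a relation. -/
def flipLoops : V → V → Bool := fun u v =>
  if u = v then !(adj u v) else adj u v

/-- Recode the type of every pair of distinct vertices `u`, `v` by the permutation that `c` assigns
to the loop statuses of `u` and `v`. -/
def recodeAdj : V → V → Bool := fun u v =>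
  if u = v then adj u v else (c (adj u u) (adj v v) (adj u v, adj v u)).1

theorem flipLoops_onFun (f : V ↪ W) (adj : W → W → Bool) :
    flipLoops (adj on f) = (flipLoops adj on f) := by
  funext u v
  simp only [flipLoops, onFun, f.apply_eq_iff_eq]

theorem recodeAdj_onFun (f : V ↪ W) (adj : W → W → Bool) :
    recodeAdj c (adj on f) = (recodeAdj c adj on f) := by
  funext u v
  simp only [recodeAdj, onFun, f.apply_eq_iff_eq]

theorem flipLoops_flipLoops : flipLoops (flipLoops adj) = adj := by
  funext u v
  by_cases huv : u = v <;> simp [flipLoops, huv]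

theorem recodeAdj_one : recodeAdj 1 adj = adj :=
  funext₂ fun _ _ => ite_self _

theorem recodeAdj_self (u : V) : recodeAdj c adj u u = adj u u := if_pos rfl

variable {c d} in
theorem recodeAdj_pairType (hc : c ∈ coherentRecodings) {u v : V} (huv : u ≠ v) :
    (recodeAdj c adj u v, recodeAdj c adj v u) = c (adj u u) (adj v v) (adj u v, adj v u) := by
  have h : c (adj v v) (adj u u) (adj v u, adj u v) = _ := hc (adj u u) (adj v v) (adj u v, adj v u)
  simp only [recodeAdj, if_neg huv, if_neg huv.symm, h, Prod.fst_swap]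

variable {d} in
theorem recodeAdj_mul (hd : d ∈ coherentRecodings) :
    recodeAdj (c * d) adj = recodeAdj c (recodeAdj d adj) := by
  funext u v
  obtain rfl | huv := eq_or_ne u v
  · simp only [recodeAdj_self]
  · rw [recodeAdj, recodeAdj, if_neg huv, if_neg huv, recodeAdj_pairType adj hd huv,
      recodeAdj_self, recodeAdj_self]
    rfl

theorem flipLoops_recodeAdj :
    flipLoops (recodeAdj c adj) = recodeAdj (fun a b => c (!a) (!b)) (flipLoops adj) := by
  funext u v
  by_cases huv : u = v
  · simp [huv, recodeAdj, flipLoops]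
  · simp [huv, Ne.symm huv, recodeAdj, flipLoops]

end Adjacency

/-- The effect of a family of permutations of the pair types on digraphs. -/
def recode (c : Bool → Bool → Perm (Bool × Bool)) (G : FinDigraph) : FinDigraph :=
  ⟨G.n, G.pos, recodeAdj c G.adj⟩

theorem mk_mono_of_onFun {T : ∀ n, (Fin n → Fin n → Bool) → Fin n → Fin n → Bool}
    (hT : ∀ {m n} (f : Fin m ↪ Fin n) adj, T m (adj on f) = (T n adj on f)) :
    Monotone fun G : FinDigraph => (⟨G.n, G.pos, T G.n G.adj⟩ : FinDigraph) := by
  rintro G H ⟨f, hf⟩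
  have hadj : (H.adj on f) = G.adj := funext₂ hf
  exact ⟨f, congrFun₂ ((hT f H.adj).symm.trans (congrArg (T G.n) hadj))⟩

theorem phi1Fn_mono : Monotone phi1Fn :=
  mk_mono_of_onFun (T := fun _ => flipLoops) flipLoops_onFun

theorem recode_mono (c : Bool → Bool → Perm (Bool × Bool)) : Monotone (recode c) :=
  mk_mono_of_onFun (T := fun _ => recodeAdj c) (recodeAdj_onFun c)

theorem phi1Fn_involutive : Involutive phi1Fn := fun G =>
  congrArg (mk G.n G.pos) (flipLoops_flipLoops G.adj)

theorem recode_one (G : FinDigraph) : recode 1 G = G :=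
  congrArg (mk G.n G.pos) (recodeAdj_one G.adj)

theorem recode_mul (c : Bool → Bool → Perm (Bool × Bool)) {d : Bool → Bool → Perm (Bool × Bool)}
    (hd : d ∈ coherentRecodings) (G : FinDigraph) : recode (c * d) G = recode c (recode d G) :=
  congrArg (mk G.n G.pos) (recodeAdj_mul c G.adj hd)

theorem phi1Fn_recode (c : Bool → Bool → Perm (Bool × Bool)) (G : FinDigraph) :
    phi1Fn (recode c G) = recode (fun a b => c (!a) (!b)) (phi1Fn G) :=
  congrArg (mk G.n G.pos) (flipLoops_recodeAdj c G.adj)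

/-- `φ₁` as an order automorphism of the preorder of digraphs. -/
def loopFlip : FinDigraph ≃o FinDigraph :=
  phi1Fn_involutive.toPerm.toOrderIso phi1Fn_mono phi1Fn_mono

theorem loopFlip_apply (G : FinDigraph) : loopFlip G = phi1Fn G := rfl

theorem loopFlip_sq : loopFlip ^ 2 = 1 :=
  OrderIso.ext (funext phi1Fn_involutive)

/-- The action of the coherent families on digraphs. -/
def recodeHom : coherentRecodings →* (FinDigraph ≃o FinDigraph) where
  toFun c := Equiv.toOrderIso
    { toFun := recode c
      invFun := recode ↑c⁻¹
      left_inv := fun G => by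
        rw [← recode_mul _ c.2, ← Subgroup.coe_mul, inv_mul_cancel, Subgroup.coe_one, recode_one]
      right_inv := fun G => by
        rw [← recode_mul _ c⁻¹.2, ← Subgroup.coe_mul, mul_inv_cancel, Subgroup.coe_one,
          recode_one] }
    (recode_mono c) (recode_mono _)
  map_one' := OrderIso.ext (funext recode_one)
  map_mul' c d := OrderIso.ext (funext fun G => recode_mul c d.2 G)

theorem recodeHom_apply (c : coherentRecodings) (G : FinDigraph) :
    recodeHom c G = recode c G := rfl

/-- The digraph on two vertices with loop statuses `a`, `b` and pair type `t`. -/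
def pairDigraph (a b : Bool) (t : Bool × Bool) : FinDigraph :=
  ⟨2, two_pos, ![![a, t.1], ![t.2, b]]⟩

/-- The digraph on three vertices, all of loop status `a`, in which vertex `0` forms pairs of type
`t` with vertices `1` and `2`, and these are not joined. -/
def starDigraph (a : Bool) (t : Bool × Bool) : FinDigraph :=
  ⟨3, three_pos, ![![a, t.1, t.1], ![t.2, a, false], ![t.2, false, a]]⟩

theorem recode_pairDigraph {c : Bool → Bool → Perm (Bool × Bool)} (hc : c ∈ coherentRecodings)
    (a b : Bool) (t : Bool × Bool) : recode c (pairDigraph a b t) = pairDigraph a b (c a b t) :=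
  congrArg (mk 2 two_pos) <| funext₂ fun u v => by
    have h : c b a (t.2, t.1) = (c a b t).swap := hc a b t
    fin_cases u <;> fin_cases v <;> simp [recodeAdj, pairDigraph, h]

theorem phi1Fn_pairDigraph (a b : Bool) (t : Bool × Bool) :
    phi1Fn (pairDigraph a b t) = pairDigraph (!a) (!b) t :=
  congrArg (mk 2 two_pos) <| funext₂ fun u v => by
    fin_cases u <;> fin_cases v <;> simp [pairDigraph]

theorem eq_or_eq_swap_of_iso_pairDigraph {a b a' b' : Bool} {t t' : Bool × Bool}
    (h : Iso (pairDigraph a b t) (pairDigraph a' b' t')) :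
    a = a' ∧ b = b' ∧ t = t' ∨ a = b' ∧ b = a' ∧ t = t'.swap := by
  obtain ⟨e, he⟩ : ∃ e : Perm (Fin 2), ∀ u v,
    (pairDigraph a' b' t').adj (e u) (e v) = (pairDigraph a b t).adj u v := h
  obtain rfl | rfl : e = 1 ∨ e = swap 0 1 := by
    clear he
    decide +revert
  · exact .inl ⟨(he 0 0).symm, (he 1 1).symm, Prod.ext (he 0 1).symm (he 1 0).symm⟩
  · exact .inr ⟨(he 0 0).symm, (he 1 1).symm, Prod.ext (he 0 1).symm (he 1 0).symm⟩

theorem recode_starDigraph {c : Bool → Bool → Perm (Bool × Bool)} (hc : c ∈ coherentRecodings)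
    {a : Bool} (ha : c a a (false, false) = (false, false)) (t : Bool × Bool) :
    recode c (starDigraph a t) = starDigraph a (c a a t) :=
  congrArg (mk 3 three_pos) <| funext₂ fun u v => by
    have h : c a a (t.2, t.1) = (c a a t).swap := hc a a t
    fin_cases u <;> fin_cases v <;> simp [recodeAdj, starDigraph, h, ha]

theorem not_iso_starDigraph_swap (a : Bool) :
    ¬ Iso (starDigraph a (true, false)) (starDigraph a (false, true)) := by
  rintro ⟨e, he⟩
  have ne01 : (0 : Fin 3) ≠ 1 := by decide
  have ne02 : (0 : Fin 3) ≠ 2 := by decide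
  have ne12 : (1 : Fin 3) ≠ 2 := by decide
  have eq_center (u v : Fin 3) (huv : u ≠ v) (h : (starDigraph a (false, true)).adj u v = true) :
      v = 0 := by
    fin_cases u <;> fin_cases v <;> simp_all [starDigraph]
  have h1 := eq_center _ _ (e.injective.ne ne01) (he (0 : Fin 3) (1 : Fin 3))
  have h2 := eq_center _ _ (e.injective.ne ne02) (he (0 : Fin 3) (2 : Fin 3))
  exact ne12 (e.injective (h1.trans h2.symm))

theorem eq_one_of_forall_iso_recode {c : Bool → Bool → Perm (Bool × Bool)}
    (hc : c ∈ coherentRecodings) (h : ∀ G, Iso (recode c G) G) : c = 1 := by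
  have hpair : ∀ a b t, c a b t = t ∨ a = b ∧ c a b t = t.swap := fun a b t => by
    have hiso := h (pairDigraph a b t)
    rw [recode_pairDigraph hc] at hiso
    obtain ⟨-, -, ht⟩ | ⟨hab, -, ht⟩ := eq_or_eq_swap_of_iso_pairDigraph hiso
    exacts [.inl ht, .inr ⟨hab, ht⟩]
  have hdiag : ∀ a b x, c a b (x, x) = (x, x) := fun a b x =>
    (hpair a b (x, x)).elim id And.right
  have hedge : ∀ a b, c a b (true, false) = (true, false) := fun a b => by
    obtain ht | ⟨rfl, ht⟩ := hpair a b (true, false)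
    · exact ht
    · have hiso := iso_symm (h (starDigraph a (true, false)))
      rw [recode_starDigraph hc (hdiag a a false), ht] at hiso
      exact absurd hiso (not_iso_starDigraph_swap a)
  refine funext₂ fun a b => Equiv.ext fun t => ?_
  match t with
  | (false, false) => exact hdiag a b false
  | (true, true) => exact hdiag a b true
  | (true, false) => exact hedge a b
  | (false, true) => exact (hc b a (true, false)).trans (congrArg Prod.swap (hedge b a))

theorem classHom_recodeHom_injective : Function.Injective (classHom.comp recodeHom) := by
  rw [injective_iff_map_eq_one]
  rintro c hc
  refine Subtype.ext (eq_one_of_forall_iso_recode c.2 fun G => ?_)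
  exact toD_eq_toD_iff.1 (DFunLike.congr_fun hc (toD G))

theorem classHom_loopFlip_notMem_range : classHom loopFlip ∉ (classHom.comp recodeHom).range := by
  rintro ⟨c, hc⟩
  let G := pairDigraph true true (false, false)
  have hiso : Iso (recode c G) (phi1Fn G) := toD_eq_toD_iff.1 (DFunLike.congr_fun hc (toD G))
  rw [recode_pairDigraph c.2, phi1Fn_pairDigraph] at hiso
  simpa using eq_or_eq_swap_of_iso_pairDigraph hiso

/-- The factor `(ZMod 2)⁴ × Perm (Bool × Bool)` of the semidirect product. Its entries are attached,
in order, to `φ₂`, `φ₃`, `φ₄`, `φ₅` and the `φ_π`. -/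
abbrev RecodingParams : Type :=
  Multiplicative (ZMod 2 × ZMod 2 × ZMod 2 × ZMod 2) × Perm (Bool × Bool)

/-- The four permutations of the pair types that commute with the swap: the first coordinate
exchanges the two symmetric types, the second the two asymmetric ones. -/
def symmetricPerm : Multiplicative (ZMod 2 × ZMod 2) →* Perm (Bool × Bool) where
  toFun x := swap (false, false) (true, true) ^ x.toAdd.1.val * sigmaSwap ^ x.toAdd.2.val
  map_one' := rfl
  map_mul' := by decide

theorem symmetricPerm_injective : Function.Injective symmetricPerm := by decide

theorem symmetricPerm_swap (x : Multiplicative (ZMod 2 × ZMod 2)) (t : Bool × Bool) :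
    symmetricPerm x t.swap = (symmetricPerm x t).swap := by
  decide +revert

/-- The parameters of a recoding that concern pairs of loopless vertices. -/
def looplessParams : RecodingParams →* Multiplicative (ZMod 2 × ZMod 2) where
  toFun x := ofAdd (x.1.toAdd.1, x.1.toAdd.2.2.1)
  map_one' := rfl
  map_mul' _ _ := rfl

/-- The parameters of a recoding that concern pairs of looped vertices. -/
def loopedParams : RecodingParams →* Multiplicative (ZMod 2 × ZMod 2) where
  toFun x := ofAdd (x.1.toAdd.2.1, x.1.toAdd.2.2.2)
  map_one' := rfl
  map_mul' _ _ := rfl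

/-- The permutation of the pair types that a recoding with given parameters applies to a pair of
vertices with given loop statuses. -/
def pairPerm : Bool → Bool → RecodingParams →* Perm (Bool × Bool)
  | false, false => symmetricPerm.comp looplessParams
  | true, true => symmetricPerm.comp loopedParams
  | true, false => MonoidHom.snd _ _
  | false, true => (MulAut.conj sigmaSwap).toMonoidHom.comp (MonoidHom.snd _ _)

/-- The coherent family with given parameters. -/
def decode : RecodingParams →* coherentRecodings where
  toFun x := ⟨fun a b => pairPerm a b x, fun
    | false, false => symmetricPerm_swap _
    | true, true => symmetricPerm_swap _
    | true, false => fun _ => rfl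
    | false, true => fun _ => rfl⟩
  map_one' := Subtype.ext <| funext₂ fun a b => map_one (pairPerm a b)
  map_mul' x y := Subtype.ext <| funext₂ fun a b => map_mul (pairPerm a b) x y

theorem decode_injective : Function.Injective decode := fun x y hxy => by
  have h : ∀ a b, pairPerm a b x = pairPerm a b y :=
    congrFun₂ (congrArg Subtype.val hxy)
  have hf := Prod.ext_iff.1 (symmetricPerm_injective (h false false))
  have ht := Prod.ext_iff.1 (symmetricPerm_injective (h true true))
  exact Prod.ext (Prod.ext hf.1 (Prod.ext ht.1 (Prod.ext hf.2 ht.2))) (h true false)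

theorem decode_conj_apply (p q r s : ZMod 2) (π : Perm (Bool × Bool)) (a b : Bool) :
    (decode (ofAdd (q, p, s, r), sigmaSwap * π * sigmaSwap)).1 a b =
      (decode (ofAdd (p, q, r, s), π)).1 (!a) (!b) :=
  match a, b with
  | false, false => rfl
  | true, true => rfl
  | true, false => rfl
  | false, true => rfl

theorem loopFlip_mul_recodeHom {c d : coherentRecodings} (h : ∀ a b, d.1 a b = c.1 (!a) (!b)) :
    loopFlip * recodeHom c = recodeHom d * loopFlip := by
  refine OrderIso.ext (funext fun G => ?_)
  simp only [RelIso.mul_apply, recodeHom_apply, loopFlip_apply, phi1Fn_recode, ← funext₂ h]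

theorem mk_eq_recode {c : Bool → Bool → Perm (Bool × Bool)} {G : FinDigraph}
    {adj : Fin G.n → Fin G.n → Bool} (hloop : ∀ u, adj u u = G.adj u u)
    (hpair : ∀ u v, u ≠ v →
      adj u v = (c (G.adj u u) (G.adj v v) (G.adj u v, G.adj v u)).1) :
    ⟨G.n, G.pos, adj⟩ = recode c G :=
  congrArg (mk G.n G.pos) <| funext₂ fun u v => by
    obtain rfl | huv := eq_or_ne u v
    · rw [recodeAdj_self, hloop]
    · rw [recodeAdj, if_neg huv, hpair u v huv]

theorem phi2Fn_eq_recode (G : FinDigraph) :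
    phi2Fn G = recode (decode (ofAdd (1, 0, 0, 0), 1)) G := by
  have h : ∀ a b x y : Bool, (if a = false ∧ b = false ∧ x = y then !x else x) =
      ((decode (ofAdd (1, 0, 0, 0), 1)).1 a b (x, y)).1 := by decide
  exact mk_eq_recode (by simp) fun u v huv =>
    (if_congr (and_iff_right huv) rfl rfl).trans (h _ _ _ _)

theorem phi3Fn_eq_recode (G : FinDigraph) :
    phi3Fn G = recode (decode (ofAdd (0, 1, 0, 0), 1)) G := by
  have h : ∀ a b x y : Bool, (if a = true ∧ b = true ∧ x = y then !x else x) =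
      ((decode (ofAdd (0, 1, 0, 0), 1)).1 a b (x, y)).1 := by decide
  exact mk_eq_recode (by simp) fun u v huv =>
    (if_congr (and_iff_right huv) rfl rfl).trans (h _ _ _ _)

theorem phi4Fn_eq_recode (G : FinDigraph) :
    phi4Fn G = recode (decode (ofAdd (0, 0, 1, 0), 1)) G := by
  have h : ∀ a b x y : Bool, (if a = false ∧ b = false ∧ x ≠ y then y else x) =
      ((decode (ofAdd (0, 0, 1, 0), 1)).1 a b (x, y)).1 := by decide
  exact mk_eq_recode (by simp) fun u v huv =>
    (if_congr (and_iff_right huv) rfl rfl).trans (h _ _ _ _)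

theorem phi5Fn_eq_recode (G : FinDigraph) :
    phi5Fn G = recode (decode (ofAdd (0, 0, 0, 1), 1)) G := by
  have h : ∀ a b x y : Bool, (if a = true ∧ b = true ∧ x ≠ y then y else x) =
      ((decode (ofAdd (0, 0, 0, 1), 1)).1 a b (x, y)).1 := by decide
  exact mk_eq_recode (by simp) fun u v huv =>
    (if_congr (and_iff_right huv) rfl rfl).trans (h _ _ _ _)

theorem phiPiFn_eq_recode (π : Perm (Bool × Bool)) (G : FinDigraph) :
    phiPiFn π G = recode (decode (1, π)) G := by
  refine mk_eq_recode (fun u => if_pos rfl) fun u v huv => (if_neg huv).trans ?_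
  cases G.adj u u <;> cases G.adj v v <;> rfl

theorem recodeHom_decode_conj {α : Multiplicative (ZMod 2) →* MulAut RecodingParams}
    (hα : ∀ (p q r s : ZMod 2) (π : Perm (Bool × Bool)), α (ofAdd 1) (ofAdd (p, q, r, s), π) =
      (ofAdd (q, p, s, r), sigmaSwap * π * sigmaSwap))
    (e : Multiplicative (ZMod 2)) (x : RecodingParams) :
    recodeHom (decode (α e x)) =
      MulAut.conj (zmodPowersHom loopFlip loopFlip_sq e) (recodeHom (decode x)) := by
  obtain rfl | rfl := eq_one_or_eq_ofAdd_one e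
  · simp only [map_one, MulAut.one_apply]
  · obtain ⟨⟨p, q, r, s⟩, π⟩ := x
    calc recodeHom (decode (α (ofAdd 1) (ofAdd (p, q, r, s), π)))
      _ = recodeHom (decode (ofAdd (q, p, s, r), sigmaSwap * π * sigmaSwap)) := by rw [hα]
      _ = loopFlip * recodeHom (decode (ofAdd (p, q, r, s), π)) * loopFlip⁻¹ :=
        eq_mul_inv_of_mul_eq (loopFlip_mul_recodeHom (decode_conj_apply p q r s π)).symm
      _ = _ := by rw [zmodPowersHom_ofAdd_one, MulAut.conj_apply]; rfl

section SemidirectAction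

variable {α : Multiplicative (ZMod 2) →* MulAut RecodingParams}
  (hα : ∀ (p q r s : ZMod 2) (π : Perm (Bool × Bool)), α (ofAdd 1) (ofAdd (p, q, r, s), π) =
    (ofAdd (q, p, s, r), sigmaSwap * π * sigmaSwap))

/-- The action on isomorphism classes of the semidirect product, in which the cyclic factor acts by
`φ₁` and the other one by the recodings. -/
def semidirectAction : RecodingParams ⋊[α] Multiplicative (ZMod 2) →* (D ≃o D) :=
  SemidirectProduct.lift ((classHom.comp recodeHom).comp decode)
    (classHom.comp (zmodPowersHom loopFlip loopFlip_sq)) fun e => MonoidHom.ext fun x =>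
      (congrArg classHom (recodeHom_decode_conj hα e x)).trans (by simp)

theorem semidirectAction_inl_toD (x : RecodingParams) (G : FinDigraph) :
    semidirectAction hα (.inl x) (toD G) = toD (recode (decode x) G) := by
  rw [semidirectAction, SemidirectProduct.lift_inl, MonoidHom.comp_apply, MonoidHom.comp_apply,
    classHom_toD, recodeHom_apply]

theorem semidirectAction_inr_toD (G : FinDigraph) :
    semidirectAction hα (.inr (ofAdd 1)) (toD G) = toD (phi1Fn G) := by
  rw [semidirectAction, SemidirectProduct.lift_inr, MonoidHom.comp_apply, zmodPowersHom_ofAdd_one,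
    classHom_toD, loopFlip_apply]

theorem semidirectAction_injective : Function.Injective (semidirectAction hα) := by
  refine injective_semidirectProduct_lift _
    (classHom_recodeHom_injective.comp decode_injective) fun e he => ?_
  obtain rfl | rfl := eq_one_or_eq_ofAdd_one e
  · rfl
  · rw [MonoidHom.comp_apply, zmodPowersHom_ofAdd_one] at he
    obtain ⟨x, hx⟩ := he
    exact absurd ⟨decode x, hx⟩ classHom_loopFlip_notMem_range

end SemidirectAction

theorem recodingParams_eq_mul_pow (p q r s : ZMod 2) (π : Perm (Bool × Bool)) :
    ((ofAdd (p, q, r, s), π) : RecodingParams) =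
      (ofAdd (1, 0, 0, 0), 1) ^ p.val * (ofAdd (0, 1, 0, 0), 1) ^ q.val *
        (ofAdd (0, 0, 1, 0), 1) ^ r.val * (ofAdd (0, 0, 0, 1), 1) ^ s.val * (1, π) := by
  have h : ∀ p q r s : ZMod 2, ofAdd (p, q, r, s) = ofAdd (1, 0, 0, 0) ^ p.val *
      ofAdd (0, 1, 0, 0) ^ q.val * ofAdd (0, 0, 1, 0) ^ r.val * ofAdd (0, 0, 0, 1) ^ s.val := by
    decide
  exact Prod.ext ((h p q r s).trans (mul_one _).symm) (by simp)

theorem closure_generators_eq_top (α : Multiplicative (ZMod 2) →* MulAut RecodingParams) :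
    Subgroup.closure ({.inr (ofAdd 1), .inl (ofAdd (1, 0, 0, 0), 1), .inl (ofAdd (0, 1, 0, 0), 1),
      .inl (ofAdd (0, 0, 1, 0), 1), .inl (ofAdd (0, 0, 0, 1), 1)} ∪ Set.range fun π => .inl (1, π) :
        Set (RecodingParams ⋊[α] Multiplicative (ZMod 2))) = ⊤ := by
  set S : Set (RecodingParams ⋊[α] Multiplicative (ZMod 2)) := _ ∪ _
  have mem_closure {g} (hg : g ∈ S) : g ∈ Subgroup.closure S := Subgroup.subset_closure hg
  have inr_mem (e : Multiplicative (ZMod 2)) : .inr e ∈ Subgroup.closure S := by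
    obtain rfl | rfl := eq_one_or_eq_ofAdd_one e
    · exact map_one (SemidirectProduct.inr (φ := α)) ▸ one_mem _
    · exact mem_closure (by simp [S])
  have inl_mem (x : RecodingParams) : .inl x ∈ Subgroup.closure S := by
    obtain ⟨⟨p, q, r, s⟩, π⟩ := x
    change SemidirectProduct.inl (ofAdd (p, q, r, s), π) ∈ _
    rw [recodingParams_eq_mul_pow]
    simp only [map_mul, map_pow]
    refine mul_mem (mul_mem (mul_mem (mul_mem ?_ ?_) ?_) ?_) (mem_closure (by simp [S])) <;>
      exact pow_mem (mem_closure (by simp [S])) _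
  refine (Subgroup.eq_top_iff' _).2 fun g => ?_
  rw [← SemidirectProduct.inl_left_mul_inr_right g]
  exact mul_mem (inl_mem _) (inr_mem _)

/-- the subgroup `C` of order automorphisms of `(D, ⊑)` generated by
`φ₁,…,φ₅` and all `φ_π` is isomorphic to `((ZMod 2)⁴ × Perm (Bool × Bool)) ⋊_α (ZMod 2)`,
where `α 1 : (p,q,r,s,π) ↦ (q,p,s,r, σ∘π∘σ)` with `σ(a,b) = (b,a)`. -/
theorem conjGroup_iso_semidirectProduct
    (g1 g2 g3 g4 g5 : D ≃o D) (gP : Equiv.Perm (Bool × Bool) → D ≃o D)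
    (h1 : ∀ G : FinDigraph, g1 (toD G) = toD (phi1Fn G))
    (h2 : ∀ G : FinDigraph, g2 (toD G) = toD (phi2Fn G))
    (h3 : ∀ G : FinDigraph, g3 (toD G) = toD (phi3Fn G))
    (h4 : ∀ G : FinDigraph, g4 (toD G) = toD (phi4Fn G))
    (h5 : ∀ G : FinDigraph, g5 (toD G) = toD (phi5Fn G))
    (hP : ∀ (π : Equiv.Perm (Bool × Bool)) (G : FinDigraph),
      gP π (toD G) = toD (phiPiFn π G))
    (α : Multiplicative (ZMod 2) →*
      MulAut (Multiplicative (ZMod 2 × ZMod 2 × ZMod 2 × ZMod 2) × Equiv.Perm (Bool × Bool)))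
    (hα : ∀ (p q r s : ZMod 2) (π : Equiv.Perm (Bool × Bool)),
      α (Multiplicative.ofAdd (1 : ZMod 2)) (Multiplicative.ofAdd (p, q, r, s), π)
        = (Multiplicative.ofAdd (q, p, s, r), sigmaSwap * π * sigmaSwap)) :
    Nonempty
      (↥(Subgroup.closure ({g1, g2, g3, g4, g5} ∪ Set.range gP : Set (D ≃o D))) ≃*
        (Multiplicative (ZMod 2 × ZMod 2 × ZMod 2 × ZMod 2) × Equiv.Perm (Bool × Bool))
          ⋊[α] Multiplicative (ZMod 2)) := by
  have e1 : g1 = semidirectAction hα (.inr (ofAdd 1)) :=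
    orderIso_ext_toD fun G => by rw [h1, semidirectAction_inr_toD]
  have e2 : g2 = semidirectAction hα (.inl (ofAdd (1, 0, 0, 0), 1)) :=
    orderIso_ext_toD fun G => by rw [h2, phi2Fn_eq_recode, semidirectAction_inl_toD]
  have e3 : g3 = semidirectAction hα (.inl (ofAdd (0, 1, 0, 0), 1)) :=
    orderIso_ext_toD fun G => by rw [h3, phi3Fn_eq_recode, semidirectAction_inl_toD]
  have e4 : g4 = semidirectAction hα (.inl (ofAdd (0, 0, 1, 0), 1)) :=
    orderIso_ext_toD fun G => by rw [h4, phi4Fn_eq_recode, semidirectAction_inl_toD]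
  have e5 : g5 = semidirectAction hα (.inl (ofAdd (0, 0, 0, 1), 1)) :=
    orderIso_ext_toD fun G => by rw [h5, phi5Fn_eq_recode, semidirectAction_inl_toD]
  have eP : gP = semidirectAction hα ∘ fun π => .inl (1, π) :=
    funext fun π => orderIso_ext_toD fun G => by
      rw [hP, phiPiFn_eq_recode, comp_apply, semidirectAction_inl_toD]
  have hrange : (semidirectAction hα).range =
      Subgroup.closure ({g1, g2, g3, g4, g5} ∪ Set.range gP) := by
    rw [MonoidHom.range_eq_map, ← closure_generators_eq_top, MonoidHom.map_closure,
      e1, e2, e3, e4, e5, eP, Set.range_comp]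
    simp only [Set.image_union, Set.image_insert_eq, Set.image_singleton]
  exact ⟨((MonoidHom.ofInjective (semidirectAction_injective hα)).trans
    (MulEquiv.subgroupCongr hrange)).symm⟩
end
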